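/- Let α ∈ (0,1/2), q = Φ^{-1}(1−α) > 0, η > 0, and let X1 ~ N(γ, ν²) and S1 ~ N(μ, σ²) be independent with σ, ν > 0, γ > ν·q and μ > max(1, σ·q). For w ∈ [0,1] let R0^w be the unique positive solution of VaR_α(R0^w(wS1+1−w) − X1) = 0, and set V0^w = R0^w − E[(R0^w(wS1+1−w) − X1)^+]/(1+η). Then V0^w ≤ V0^0 for all w ∈ (0, ŵ), where ŵ = 1 if μ ≥ 1 + σq and otherwise ŵ = 2(μ−1)νq / ((1 + σq − μ)(μ − 1 + σq)(γ + νq)). -/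

import Mathlib

/-!
A Gaussian position with zero value-at-risk at level `α` is its standard deviation times `q + Z`
with `Z` standard normal, so its shareholder value is proportional to its standard deviation, and
the risky asset can only raise it. It remains to compare the capital requirements. The riskless one
is `R₀⁰ = γ + νq`, and `w ≤ ŵ` ensures that at this capital the expected excess return of the risky
asset covers the additional value-at-risk it causes. As the value-at-risk is positive without
capital, it vanishes somewhere in `(0, R₀⁰]`, and by uniqueness `R₀ʷ` is that zero.
-/

open MeasureTheory ProbabilityTheory Real Set

noncomputable def VaR {Ω : Type*} [MeasurableSpace Ω] (P : Measure Ω) (β : ℝ) (Y : Ω → ℝ) : ℝ :=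
  sInf {y : ℝ | 1 - β ≤ (P {ω | -Y ω ≤ y}).toReal}

noncomputable def ES {Ω : Type*} [MeasurableSpace Ω] (P : Measure Ω) (α : ℝ) (Y : Ω → ℝ) : ℝ :=
  (1 / α) * ∫ β in (0:ℝ)..α, VaR P β Y

noncomputable def stdNormalCDF (x : ℝ) : ℝ := ((gaussianReal 0 1) (Iic x)).toReal

noncomputable def stdNormalPDF (x : ℝ) : ℝ := (Real.sqrt (2 * π))⁻¹ * Real.exp (-x ^ 2 / 2)

/-- Net asset value at time one of an insurer with liability `X` and capital `r`, the fraction `w`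
of which is invested at the gross return `S` and the rest at the riskless gross return one. -/
def netPosition {Ω : Type*} (X S : Ω → ℝ) (w r : ℝ) : Ω → ℝ :=
  fun ω => r * (w * S ω + 1 - w) - X ω

/-- `r` is the unique positive capital level at which the position `Y r` has zero value-at-risk:
the solvency requirement `R₀` of the paper. -/
structure IsSolvencyCapital {Ω : Type*} [MeasurableSpace Ω] (P : Measure Ω) (α : ℝ)
    (Y : ℝ → Ω → ℝ) (r : ℝ) : Prop where
  pos : 0 < r
  VaR_eq_zero : VaR P α (Y r) = 0
  unique : ∀ r', 0 < r' → VaR P α (Y r') = 0 → r' = r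

/-- The cost-of-capital premium `V₀(r) = r - C₀(r)`, where `C₀(r) = E[(Y r)⁺] / (1 + η)` is the
shareholder value of the position `Y r`. -/
noncomputable def premium {Ω : Type*} [MeasurableSpace Ω] (P : Measure Ω) (η : ℝ)
    (Y : ℝ → Ω → ℝ) (r : ℝ) : ℝ :=
  r - (∫ ω, max (Y r ω) 0 ∂P) / (1 + η)

/-- Standard deviation of `netPosition X S w r` when `X` and `S` are uncorrelated with standard
deviations `ν` and `σ`. -/
noncomputable def netSD (ν σ w r : ℝ) : ℝ := √((r * w * σ) ^ 2 + ν ^ 2)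

/-- The weight `ŵ` up to which investing in the risky asset does not raise the premium. -/
noncomputable def maxWeight (q γ ν μ σ : ℝ) : ℝ :=
  if 1 + σ * q ≤ μ then 1
  else 2 * (μ - 1) * ν * q / ((1 + σ * q - μ) * (μ - 1 + σ * q) * (γ + ν * q))

lemma strictMono_measureReal_Iic {β : Type*} [LinearOrder β] [DenselyOrdered β]
    [TopologicalSpace β] [OrderTopology β] [MeasurableSpace β] [OpensMeasurableSpace β]
    (m : Measure β) [IsFiniteMeasure m] [m.IsOpenPosMeasure] :
    StrictMono fun x => m.real (Iic x) := by
  intro a b hab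
  have hpos : 0 < m.real (Ioc a b) :=
    ENNReal.toReal_pos (((Measure.measure_Ioo_pos m).2 hab).trans_le
      (measure_mono Ioo_subset_Ioc_self)).ne' (measure_ne_top _ _)
  have hsplit : m.real (Iic b) = m.real (Iic a) + m.real (Ioc a b) := by
    rw [← Iic_union_Ioc_eq_Iic hab.le,
      measureReal_union (Iic_disjoint_Ioc le_rfl) measurableSet_Ioc]
  change m.real (Iic a) < m.real (Iic b)
  linarith

lemma strictMono_stdNormalCDF : StrictMono stdNormalCDF :=
  haveI := (gaussianReal_absolutelyContinuous' 0 one_ne_zero).isOpenPosMeasure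
  strictMono_measureReal_Iic (gaussianReal 0 1)

lemma hasLaw_add_mul_stdGaussian (m s : ℝ) :
    HasLaw (fun z => m + s * z) (gaussianReal m (s ^ 2).toNNReal) (gaussianReal 0 1) := by
  simpa [Real.toNNReal_of_nonneg (sq_nonneg s)] using
    gaussianReal_const_add (gaussianReal_const_mul (HasLaw.id (μ := gaussianReal 0 1)) s) m

section Gaussian

variable {Ω : Type*} [MeasurableSpace Ω] {P : Measure Ω} {Y : Ω → ℝ} {α q m s : ℝ}

lemma measureReal_le_of_hasLaw_gaussianReal (hY : HasLaw Y (gaussianReal m (s ^ 2).toNNReal) P)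
    (hs : 0 < s) (y : ℝ) : P.real {ω | Y ω ≤ y} = stdNormalCDF ((y - m) / s) := by
  rw [hY.measureReal_eq (p := (· ≤ y)) measurableSet_Iic,
    ← (hasLaw_add_mul_stdGaussian m s).measureReal_eq (p := (· ≤ y)) measurableSet_Iic]
  change (gaussianReal 0 1).real _ = (gaussianReal 0 1).real (Iic ((y - m) / s))
  congr 1
  ext z
  simp only [mem_ofPred_eq, mem_Iic, le_div_iff₀ hs, le_sub_iff_add_le', mul_comm z]

lemma VaR_of_hasLaw_gaussianReal (hY : HasLaw Y (gaussianReal m (s ^ 2).toNNReal) P)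
    (hs : 0 < s) (hq : stdNormalCDF q = 1 - α) : VaR P α Y = s * q - m := by
  have hset : {y | 1 - α ≤ (P {ω | -Y ω ≤ y}).toReal} = Ici (s * q - m) := by
    ext y
    have hcdf : (P {ω | -Y ω ≤ y}).toReal = stdNormalCDF ((y - -m) / s) :=
      measureReal_le_of_hasLaw_gaussianReal (gaussianReal_neg hY) hs y
    rw [mem_ofPred_eq, hcdf, ← hq, strictMono_stdNormalCDF.le_iff_le, le_div_iff₀ hs, mem_Ici,
      sub_neg_eq_add, sub_le_iff_le_add, mul_comm]
  rw [VaR, hset, csInf_Ici]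

lemma integral_max_zero_of_VaR_eq_zero (hY : HasLaw Y (gaussianReal m (s ^ 2).toNNReal) P)
    (hs : 0 < s) (hq : stdNormalCDF q = 1 - α) (hVaR : VaR P α Y = 0) :
    ∫ ω, max (Y ω) 0 ∂P = s * ∫ z, max (q + z) 0 ∂gaussianReal 0 1 := by
  have hm : m = s * q := by linarith [VaR_of_hasLaw_gaussianReal hY hs hq]
  have hmeas (κ : Measure ℝ) : AEStronglyMeasurable (fun y : ℝ => max y 0) κ :=
    (continuous_id.max continuous_const).aestronglyMeasurable
  calc ∫ ω, max (Y ω) 0 ∂P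
      = ∫ y, max y 0 ∂gaussianReal m (s ^ 2).toNNReal := hY.integral_comp (hmeas _)
    _ = ∫ z, max (m + s * z) 0 ∂gaussianReal 0 1 :=
        ((hasLaw_add_mul_stdGaussian m s).integral_comp (hmeas _)).symm
    _ = ∫ z, s * max (q + z) 0 ∂gaussianReal 0 1 := by
        simp only [hm, ← mul_add, mul_max_of_nonneg _ _ hs.le, mul_zero]
    _ = s * ∫ z, max (q + z) 0 ∂gaussianReal 0 1 := integral_const_mul _ _

lemma integral_max_zero_le_of_VaR_eq_zero {Y' : Ω → ℝ} {m' s' : ℝ}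
    (hY : HasLaw Y (gaussianReal m (s ^ 2).toNNReal) P)
    (hY' : HasLaw Y' (gaussianReal m' (s' ^ 2).toNNReal) P) (hs : 0 < s) (hss' : s ≤ s')
    (hq : stdNormalCDF q = 1 - α) (hVaR : VaR P α Y = 0) (hVaR' : VaR P α Y' = 0) :
    ∫ ω, max (Y ω) 0 ∂P ≤ ∫ ω, max (Y' ω) 0 ∂P := by
  rw [integral_max_zero_of_VaR_eq_zero hY hs hq hVaR,
    integral_max_zero_of_VaR_eq_zero hY' (hs.trans_le hss') hq hVaR']
  exact mul_le_mul_of_nonneg_right hss' (integral_nonneg fun z => le_max_right _ _)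

end Gaussian

lemma le_netSD (ν σ w r : ℝ) : ν ≤ netSD ν σ w r :=
  Real.le_sqrt_of_sq_le (le_add_of_nonneg_left (sq_nonneg _))

lemma netSD_zero_weight {ν : ℝ} (hν : 0 ≤ ν) (σ r : ℝ) : netSD ν σ 0 r = ν := by
  simp [netSD, Real.sqrt_sq hν]

lemma netSD_zero_capital {ν : ℝ} (hν : 0 ≤ ν) (σ w : ℝ) : netSD ν σ w 0 = ν := by
  simp [netSD, Real.sqrt_sq hν]

lemma continuous_netSD (ν σ w : ℝ) : Continuous (netSD ν σ w) := by
  unfold netSD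
  fun_prop

lemma mul_sq_sub_sq_le_of_le_maxWeight {q γ ν μ σ w : ℝ} (hq : 0 < q) (hν : 0 ≤ ν) (hσ : 0 ≤ σ)
    (hμ : 1 ≤ μ) (hγ : 0 < γ + ν * q) (hw : 0 ≤ w) (hwmax : w ≤ maxWeight q γ ν μ σ) :
    (γ + ν * q) * w * ((σ * q) ^ 2 - (μ - 1) ^ 2) ≤ 2 * (μ - 1) * ν * q := by
  have hμ' : 0 ≤ μ - 1 := sub_nonneg.2 hμ
  have hσq : 0 ≤ σ * q := by positivity
  rw [maxWeight] at hwmax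
  split_ifs at hwmax with hdom
  · have hsq : (σ * q) ^ 2 - (μ - 1) ^ 2 ≤ 0 := sub_nonpos.2 (by gcongr; linarith)
    calc (γ + ν * q) * w * ((σ * q) ^ 2 - (μ - 1) ^ 2) ≤ 0 :=
          mul_nonpos_of_nonneg_of_nonpos (by positivity) hsq
      _ ≤ 2 * (μ - 1) * ν * q := by positivity
  · have hden : 0 < (1 + σ * q - μ) * (μ - 1 + σ * q) * (γ + ν * q) :=
      mul_pos (mul_pos (by linarith) (by linarith)) hγ
    calc (γ + ν * q) * w * ((σ * q) ^ 2 - (μ - 1) ^ 2)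
        = w * ((1 + σ * q - μ) * (μ - 1 + σ * q) * (γ + ν * q)) := by ring
      _ ≤ 2 * (μ - 1) * ν * q := (le_div_iff₀ hden).1 hwmax

lemma netSD_mul_le_of_le_maxWeight {q γ ν μ σ w : ℝ} (hν : 0 ≤ ν) (hσ : 0 ≤ σ) (hμ : 1 ≤ μ)
    (hγ : 0 < γ + ν * q) (hw : 0 ≤ w) (hwmax : w ≤ maxWeight q γ ν μ σ) :
    netSD ν σ w (γ + ν * q) * q ≤ ν * q + (γ + ν * q) * (w * (μ - 1)) := by
  have hμ' : 0 ≤ μ - 1 := sub_nonneg.2 hμ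
  rcases le_or_gt q 0 with hq | hq
  · exact (mul_le_mul_of_nonpos_right (le_netSD _ _ _ _) hq).trans
      (le_add_of_nonneg_right (mul_nonneg hγ.le (mul_nonneg hw hμ')))
  have hweight := mul_sq_sub_sq_le_of_le_maxWeight hq hν hσ hμ hγ hw hwmax
  set A := γ + ν * q
  refine le_of_sq_le_sq ?_ (by positivity)
  calc (netSD ν σ w A * q) ^ 2
      = (A * w * σ * q) ^ 2 + (ν * q) ^ 2 := by
        rw [netSD, mul_pow, Real.sq_sqrt (by positivity)]
        ring
    _ = A * w * (A * w * ((σ * q) ^ 2 - (μ - 1) ^ 2))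
          + (A * (w * (μ - 1))) ^ 2 + (ν * q) ^ 2 := by ring
    _ ≤ A * w * (2 * (μ - 1) * ν * q) + (A * (w * (μ - 1))) ^ 2 + (ν * q) ^ 2 := by gcongr
    _ = (ν * q + A * (w * (μ - 1))) ^ 2 := by ring

lemma IsSolvencyCapital.le_of_VaR_nonpos {Ω : Type*} [MeasurableSpace Ω] {P : Measure Ω}
    {α a r : ℝ} {Y : ℝ → Ω → ℝ} (hr : IsSolvencyCapital P α Y r) (ha : 0 ≤ a)
    (hcont : ContinuousOn (fun x => VaR P α (Y x)) (Icc 0 a)) (h0 : 0 < VaR P α (Y 0))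
    (hVaR : VaR P α (Y a) ≤ 0) : r ≤ a := by
  obtain ⟨x, ⟨hx0, hxa⟩, hx⟩ := intermediate_value_Icc' ha hcont ⟨hVaR, h0.le⟩
  have hx_ne : x ≠ 0 := by
    rintro rfl
    exact h0.ne' hx
  exact hr.unique x (hx0.lt_of_ne' hx_ne) hx ▸ hxa

section NetPosition

variable {Ω : Type*} [MeasurableSpace Ω] {P : Measure Ω} {X S : Ω → ℝ}
  {α q γ ν μ σ w r r₀ : ℝ}

lemma hasLaw_netPosition (hX : HasLaw X (gaussianReal γ (ν ^ 2).toNNReal) P)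
    (hS : HasLaw S (gaussianReal μ (σ ^ 2).toNNReal) P) (hXS : IndepFun X S P) (w r : ℝ) :
    HasLaw (netPosition X S w r)
      (gaussianReal (r * (1 + w * (μ - 1)) - γ) (netSD ν σ w r ^ 2).toNNReal) P := by
  have hasset := gaussianReal_const_add (gaussianReal_const_mul hS (r * w)) (r * (1 - w))
  have hliab := gaussianReal_neg hX
  have hindep : IndepFun (fun ω => r * (1 - w) + r * w * S ω) (-X) P :=
    hXS.symm.comp (φ := fun x => r * (1 - w) + r * w * x) (ψ := Neg.neg)
      (by fun_prop) (by fun_prop)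
  have hsum : netPosition X S w r = (fun ω => r * (1 - w) + r * w * S ω) + -X := by
    ext ω
    simp only [netPosition, Pi.add_apply, Pi.neg_apply]
    ring
  rw [hsum]
  refine ⟨hasset.aemeasurable.add hliab.aemeasurable, ?_⟩
  rw [gaussianReal_add_gaussianReal_of_indepFun hindep hasset.map_eq hliab.map_eq]
  congr 1
  · ring
  · ext
    rw [netSD, Real.sq_sqrt (by positivity), Real.coe_toNNReal _ (by positivity)]
    simp only [NNReal.coe_add, NNReal.coe_mul, NNReal.coe_mk, Real.coe_toNNReal _ (sq_nonneg _)]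
    ring

lemma VaR_netPosition (hq : stdNormalCDF q = 1 - α) (hν : 0 < ν)
    (hX : HasLaw X (gaussianReal γ (ν ^ 2).toNNReal) P)
    (hS : HasLaw S (gaussianReal μ (σ ^ 2).toNNReal) P) (hXS : IndepFun X S P) (w r : ℝ) :
    VaR P α (netPosition X S w r) = netSD ν σ w r * q - (r * (1 + w * (μ - 1)) - γ) :=
  VaR_of_hasLaw_gaussianReal (hasLaw_netPosition hX hS hXS w r)
    (hν.trans_le (le_netSD ν σ w r)) hq

lemma IsSolvencyCapital.eq_of_riskless (hr₀ : IsSolvencyCapital P α (netPosition X S 0) r₀)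
    (hq : stdNormalCDF q = 1 - α) (hν : 0 < ν)
    (hX : HasLaw X (gaussianReal γ (ν ^ 2).toNNReal) P)
    (hS : HasLaw S (gaussianReal μ (σ ^ 2).toNNReal) P) (hXS : IndepFun X S P) :
    r₀ = γ + ν * q := by
  have hVaR := VaR_netPosition hq hν hX hS hXS 0 r₀
  rw [hr₀.VaR_eq_zero, netSD_zero_weight hν.le] at hVaR
  linarith

lemma IsSolvencyCapital.risky_le_riskless
    (hr : IsSolvencyCapital P α (netPosition X S w) r)
    (hr₀ : IsSolvencyCapital P α (netPosition X S 0) r₀)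
    (hq : stdNormalCDF q = 1 - α) (hν : 0 < ν) (hσ : 0 ≤ σ) (hμ : 1 ≤ μ)
    (hX : HasLaw X (gaussianReal γ (ν ^ 2).toNNReal) P)
    (hS : HasLaw S (gaussianReal μ (σ ^ 2).toNNReal) P) (hXS : IndepFun X S P)
    (hw : 0 ≤ w) (hwmax : w ≤ maxWeight q γ ν μ σ) : r ≤ r₀ := by
  obtain rfl := hr₀.eq_of_riskless hq hν hX hS hXS
  have hVaR := VaR_netPosition hq hν hX hS hXS w
  refine hr.le_of_VaR_nonpos hr₀.pos.le ?_ ?_ ?_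
  · simp only [hVaR]
    have := continuous_netSD ν σ w
    fun_prop
  · rw [hVaR, netSD_zero_capital hν.le]
    linarith [hr₀.pos]
  · rw [hVaR]
    linarith [netSD_mul_le_of_le_maxWeight hν.le hσ hμ hr₀.pos hw hwmax]

theorem V0_risky_le_V0_riskless_general {η : ℝ} (hq : stdNormalCDF q = 1 - α) (hη : -1 < η)
    (hν : 0 < ν) (hσ : 0 ≤ σ) (hμ : 1 ≤ μ)
    (hX : HasLaw X (gaussianReal γ (ν ^ 2).toNNReal) P)
    (hS : HasLaw S (gaussianReal μ (σ ^ 2).toNNReal) P) (hXS : IndepFun X S P)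
    (hw : 0 ≤ w) (hwmax : w ≤ maxWeight q γ ν μ σ)
    (hr₀ : IsSolvencyCapital P α (netPosition X S 0) r₀)
    (hr : IsSolvencyCapital P α (netPosition X S w) r) :
    premium P η (netPosition X S w) r ≤ premium P η (netPosition X S 0) r₀ := by
  have hcapital : r ≤ r₀ := hr.risky_le_riskless hr₀ hq hν hσ hμ hX hS hXS hw hwmax
  have hSD : netSD ν σ 0 r₀ ≤ netSD ν σ w r :=
    (netSD_zero_weight hν.le σ r₀).trans_le (le_netSD ν σ w r)
  have hshareholder : ∫ ω, max (netPosition X S 0 r₀ ω) 0 ∂P ≤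
      ∫ ω, max (netPosition X S w r ω) 0 ∂P :=
    integral_max_zero_le_of_VaR_eq_zero (hasLaw_netPosition hX hS hXS 0 r₀)
      (hasLaw_netPosition hX hS hXS w r) (hν.trans_le (le_netSD ν σ 0 r₀)) hSD hq
      hr₀.VaR_eq_zero hr.VaR_eq_zero
  exact sub_le_sub hcapital (div_le_div_of_nonneg_right hshareholder (by linarith))

end NetPosition

/-- the premium `V0^w` is at most the risk-less premium `V0^0`
for all weights `w ∈ (0, ŵ)`. -/
theorem V0_risky_le_V0_riskless
    {Ω : Type*} [MeasurableSpace Ω] (P : Measure Ω) [IsProbabilityMeasure P]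
    (α q η γ ν μ σ : ℝ) (hα : α ∈ Ioo (0:ℝ) (1/2))
    (hq : stdNormalCDF q = 1 - α) (hq0 : 0 < q) (hη : 0 < η)
    (hν : 0 < ν) (hσ : 0 < σ) (hγ : ν * q < γ) (hμ : max 1 (σ * q) < μ)
    (X1 S1 : Ω → ℝ) (hX1m : Measurable X1) (hS1m : Measurable S1)
    (hX : P.map X1 = gaussianReal γ (ν ^ 2).toNNReal)
    (hS : P.map S1 = gaussianReal μ (σ ^ 2).toNNReal)
    (hindep : IndepFun X1 S1 P)
    (R : ℝ → ℝ)
    (hR : ∀ w ∈ Icc (0:ℝ) 1, 0 < R w ∧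
        VaR P α (fun ω => R w * (w * S1 ω + 1 - w) - X1 ω) = 0)
    (hRuniq : ∀ w ∈ Icc (0:ℝ) 1, ∀ r : ℝ, 0 < r →
        VaR P α (fun ω => r * (w * S1 ω + 1 - w) - X1 ω) = 0 → r = R w) :
    ∀ w : ℝ, 0 < w → w ≤ 1 →
      w < (if 1 + σ * q ≤ μ then 1
           else 2 * (μ - 1) * ν * q
              / ((1 + σ * q - μ) * (μ - 1 + σ * q) * (γ + ν * q))) →
      R w - (∫ ω, max (R w * (w * S1 ω + 1 - w) - X1 ω) 0 ∂P) / (1 + η)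
        ≤ R 0 - (∫ ω, max (R 0 - X1 ω) 0 ∂P) / (1 + η) := by
  intro w hw hw1 hwmax
  have hcap {w : ℝ} (hw : w ∈ Icc (0:ℝ) 1) : IsSolvencyCapital P α (netPosition X1 S1 w) (R w) :=
    ⟨(hR w hw).1, (hR w hw).2, hRuniq w hw⟩
  simpa [premium, netPosition] using
    V0_risky_le_V0_riskless_general hq (neg_one_lt_zero.trans hη) hν hσ.le (max_lt_iff.1 hμ).1.le
      ⟨hX1m.aemeasurable, hX⟩ ⟨hS1m.aemeasurable, hS⟩ hindep hw.le hwmax.le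
      (hcap ⟨le_rfl, zero_le_one⟩) (hcap ⟨hw.le, hw1⟩)
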